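/- In the straightening law for minors, the straightening relation can be chosen content-preserving: with hypotheses as in the straightening law (S′, S″ ⊆ {1,…,m}, T′, T″ ⊆ {1,…,n}, and not both S′ ≤ S″ and T′ ≤ T″), the quadruples (S′ᵢ, T′ᵢ, S″ᵢ, T″ᵢ) and signs εᵢ with X(S′|T′)·X(S″|T″) = Σᵢ εᵢ·X(S′ᵢ|T′ᵢ)·X(S″ᵢ|T″ᵢ) for all matrices X, (S′ᵢ,T′ᵢ) < (S′,T′) and (S′ᵢ,T′ᵢ) ≤ (S″ᵢ,T″ᵢ), can additionally be chosen so that for every i, S′ᵢ ∪ S″ᵢ = S′ ∪ S″ and T′ᵢ ∪ T″ᵢ = T′ ∪ T″ as multisets (i.e., counting multiplicities). -/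

import Mathlib

open Finset

/-- The minor `X(A|B)`: the determinant of the submatrix of `X` with row indices in `A` and
column indices in `B`, taken in increasing order; `0` if `|A| ≠ |B|`. -/
def minorM {m n : ℕ} {R : Type*} [CommRing R]
    (X : Matrix (Fin m) (Fin n) R) (A : Finset (Fin m)) (B : Finset (Fin n)) : R :=
  if h : A.card = B.card then
    (Matrix.of fun i j : Fin A.card =>
      X (A.orderEmbOfFin rfl i) (B.orderEmbOfFin h.symm j)).det
  else 0

/-- The Laplace product `X{A|B} = (-1)^(ΣA+ΣB) X(A|B) X(Ã|B̃)`, where elements of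
`Fin n` are counted as the numbers `1,…,n` (so `i : Fin n` counts as `i+1`). -/
def lap {n : ℕ} {R : Type*} [CommRing R]
    (X : Matrix (Fin n) (Fin n) R) (A B : Finset (Fin n)) : R :=
  (-1 : R) ^ (∑ i ∈ A, ((i : ℕ) + 1) + ∑ j ∈ B, ((j : ℕ) + 1)) *
    (minorM X A B * minorM X Aᶜ Bᶜ)

/-- The partial order `S ≤ T` on finite subsets of a linearly ordered set:
writing `S = {s₁<⋯<s_p}` and `T = {t₁<⋯<t_q}`, it means `p ≥ q` and `s_ν ≤ t_ν` for `ν ≤ q`. -/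
def domLE {α : Type*} [LinearOrder α] (S T : Finset α) : Prop :=
  T.card ≤ S.card ∧ ∀ (ν : ℕ) (hT : ν < (T.sort (· ≤ ·)).length)
    (hS : ν < (S.sort (· ≤ ·)).length),
    (S.sort (· ≤ ·))[ν] ≤ (T.sort (· ≤ ·))[ν]

/-- A subset `S ⊆ {1,…,n}` is good if `S ≤ S̃` where `S̃` is the complement of `S`. -/
def goodSet {n : ℕ} (S : Finset (Fin n)) : Prop := domLE S Sᶜ

/-- The generic `m×n` matrix, whose entries are the indeterminates `x_{ij}`. -/
noncomputable def genX (m n : ℕ) (R : Type*) [CommRing R] :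
    Matrix (Fin m) (Fin n) (MvPolynomial (Fin m × Fin n) R) :=
  Matrix.of fun i j => MvPolynomial.X (i, j)

/-!
The minor `X(S|T)` is, up to sign, the maximal minor of `Xᵀ` with an identity matrix appended below
whose rows are the rows of `Xᵀ` with index in `T` and the unit vectors with index outside `S`. This
reduces the theorem to the straightening of products `[f][g]` of maximal minors of one matrix `Y`
with `m` columns, where `f` and `g` are `m`-tuples of rows of `Y` and the rows of `Y` are ordered.

If `f` is not below `g`, some upper set `U` contains more entries of `f` than of `g`. Then there are
more than `m` positions in all at which `f` has an entry in `U` or `g` has an entry outside `U`.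
Antisymmetrizing `[f][g]` over these positions gives an alternating function of more than `m`
vectors in a free module of rank `m`, that is, `0`. One term of this relation is `[f][g]`; each of
the others replaces entries of `f` in `U` by entries of `g` outside `U`, which lowers `f` and keeps
the joint content. Repeating this on the terms that are not yet standard terminates.

Ordering the rows of `Xᵀ` increasingly, followed by the unit vectors in decreasing order, turns the
comparison of tuples into the comparisons `S₁ ≤ S₂` and `T₁ ≤ T₂`.
-/

theorem exists_sum_units_smul_of_mem_closure {G : Type*} [AddCommGroup G] {s : Set G} {x : G}
    (hx : x ∈ AddSubgroup.closure s) :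
    ∃ (k : ℕ) (ε : Fin k → ℤˣ) (p : Fin k → G), (∀ i, p i ∈ s) ∧ x = ∑ i, ε i • p i := by
  rw [← AddSubgroup.mem_toAddSubmonoid, AddSubgroup.closure_toAddSubmonoid] at hx
  obtain ⟨l, hl, rfl⟩ := AddSubmonoid.exists_list_of_mem_closure hx
  have hterm (i : Fin l.length) : ∃ (ε : ℤˣ) (p : G), p ∈ s ∧ l[i] = ε • p := by
    rcases hl l[i] (l.getElem_mem i.2) with hi | hi
    · exact ⟨1, l[i], hi, (one_smul ..).symm⟩
    · exact ⟨-1, -l[i], hi, by simp⟩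
  choose ε p hp hε using hterm
  exact ⟨l.length, ε, p, hp, (Fin.sum_univ_getElem l).symm.trans (sum_congr rfl fun i _ => hε i)⟩

section Alternating

open scoped TensorProduct

variable {R M N N₁ N₂ α β ν : Type*} [CommRing R] [AddCommGroup M] [Module R M]
  [AddCommGroup N] [Module R N] [AddCommGroup N₁] [Module R N₁] [AddCommGroup N₂] [Module R N₂]

theorem alternatingMap_eq_zero_of_card_lt [Fintype ν] [Fintype α] (e : Module.Basis ν R M)
    (h : Fintype.card ν < Fintype.card α) (a : M [⋀^α]→ₗ[R] N) : a = 0 :=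
  e.ext_alternating fun v hv => absurd (Fintype.card_le_of_injective v hv) h.not_ge

/-- The alternating map in the positions satisfying `P` that is obtained from `a` by freezing every
other argument at its value in `v`. -/
def alternatingRestrict (a : M [⋀^α]→ₗ[R] N) (P : α → Prop) [DecidablePred P] (v : α → M) :
    M [⋀^{i // P i}]→ₗ[R] N :=
  { a.toMultilinearMap.domDomRestrict P (fun i => v i) with
    map_eq_zero_of_eq' := fun w i j hw hij =>
      a.map_eq_zero_of_eq _ (by simp [i.2, j.2, hw]) (Subtype.coe_injective.ne hij) }

theorem alternatingRestrict_apply (a : M [⋀^α]→ₗ[R] N) (P : α → Prop) [DecidablePred P]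
    (v : α → M) (w : {i // P i} → M) :
    alternatingRestrict a P v w = a fun i => if h : P i then w ⟨i, h⟩ else v i := rfl

theorem exists_inl_eq_inr_of_notMem_sumCongrHom_range [Finite α] [Finite β]
    {σ : Equiv.Perm (α ⊕ β)} (h : σ ∉ (Equiv.Perm.sumCongrHom α β).range) :
    ∃ i j, σ (.inl i) = .inr j := by
  contrapose! h
  refine Equiv.Perm.mem_sumCongrHom_range_of_perm_mapsTo_inl ?_
  rintro _ ⟨i, rfl⟩
  cases hi : σ (.inl i) with
  | inl i' => exact ⟨i', rfl⟩
  | inr j => exact absurd hi (h i j)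

section Shuffle

variable (P : α ⊕ β → Prop) [DecidablePred P]

/-- A permutation of the positions satisfying `P`, these being split into left and right ones,
extended to all positions by the identity. -/
def extendPerm (σ : Equiv.Perm ({i // P (.inl i)} ⊕ {j // P (.inr j)})) : Equiv.Perm (α ⊕ β) :=
  σ.extendDomain Equiv.subtypeSum.symm

variable {P} (σ : Equiv.Perm ({i // P (.inl i)} ⊕ {j // P (.inr j)}))

theorem extendPerm_inl {i : α} (h : P (.inl i)) :
    extendPerm P σ (.inl i) = (Equiv.subtypeSum.symm (σ (.inl ⟨i, h⟩)) : {s // P s}) :=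
  σ.extendDomain_apply_subtype Equiv.subtypeSum.symm h

theorem extendPerm_inr {j : β} (h : P (.inr j)) :
    extendPerm P σ (.inr j) = (Equiv.subtypeSum.symm (σ (.inr ⟨j, h⟩)) : {s // P s}) :=
  σ.extendDomain_apply_subtype Equiv.subtypeSum.symm h

theorem extendPerm_of_not {s : α ⊕ β} (h : ¬P s) : extendPerm P σ s = s :=
  σ.extendDomain_apply_not_subtype Equiv.subtypeSum.symm h

theorem summand_alternatingRestrict [Fintype α] [Fintype β] [DecidableEq α] [DecidableEq β]
    (a : M [⋀^α]→ₗ[R] N₁) (b : M [⋀^β]→ₗ[R] N₂) (v : α ⊕ β → M) :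
    AlternatingMap.domCoprod.summand
        (alternatingRestrict a (fun i => P (.inl i)) (v ∘ .inl))
        (alternatingRestrict b (fun j => P (.inr j)) (v ∘ .inr)) (Quotient.mk'' σ)
        (fun s => v (Equiv.subtypeSum.symm s : {s // P s})) =
      (Equiv.Perm.sign σ : ℤ) •
        (a (v ∘ extendPerm P σ ∘ .inl) ⊗ₜ[R] b (v ∘ extendPerm P σ ∘ .inr)) := by
  rw [AlternatingMap.domCoprod.summand_mk'', _root_.smul_apply, Units.smul_def,
    MultilinearMap.domDomCongr_apply, MultilinearMap.domCoprod_apply]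
  simp only [AlternatingMap.coe_multilinearMap, alternatingRestrict_apply]
  congr 3 <;> funext i <;> split_ifs with h
  · simp only [Function.comp_apply, extendPerm_inl σ h]
  · simp only [Function.comp_apply, extendPerm_of_not σ h]
  · simp only [Function.comp_apply, extendPerm_inr σ h]
  · simp only [Function.comp_apply, extendPerm_of_not σ h]

end Shuffle

/- Antisymmetrizing `a ⊗ b` over the positions satisfying `P` gives an alternating map in more
arguments than the rank of `M`, which vanishes; the term of the identity is `a v ⊗ b v`. -/
theorem tmul_mem_of_forall_exchange_mem [Fintype ν] [Finite α] [Finite β]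
    (e : Module.Basis ν R M) (a : M [⋀^α]→ₗ[R] N₁) (b : M [⋀^β]→ₗ[R] N₂) (v : α ⊕ β → M)
    (P : α ⊕ β → Prop) (hP : Fintype.card ν < Nat.card {s // P s}) (G : AddSubgroup (N₁ ⊗[R] N₂))
    (hG : ∀ τ : Equiv.Perm (α ⊕ β), (∀ s, ¬P s → τ s = s) → (∃ i j, τ (.inl i) = .inr j) →
      a (v ∘ τ ∘ .inl) ⊗ₜ[R] b (v ∘ τ ∘ .inr) ∈ G) :
    a (v ∘ .inl) ⊗ₜ[R] b (v ∘ .inr) ∈ G := by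
  classical
  cases nonempty_fintype α
  cases nonempty_fintype β
  let a' := alternatingRestrict a (fun i => P (.inl i)) (v ∘ .inl)
  let b' := alternatingRestrict b (fun j => P (.inr j)) (v ∘ .inr)
  let w : {i // P (.inl i)} ⊕ {j // P (.inr j)} → M :=
    fun s => v (Equiv.subtypeSum.symm s : {s // P s})
  have hvanish : a'.domCoprod b' = 0 := by
    refine alternatingMap_eq_zero_of_card_lt e ?_ _
    rwa [← Nat.card_eq_fintype_card (α := _ ⊕ _), ← Nat.card_congr Equiv.subtypeSum]
  have hsum : ∑ q, AlternatingMap.domCoprod.summand a' b' q w = 0 := by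
    simpa only [AlternatingMap.domCoprod_apply, _root_.sum_apply, AlternatingMap.zero_apply]
      using congrArg (· w) hvanish
  have hsummand (σ) : AlternatingMap.domCoprod.summand a' b' (Quotient.mk'' σ) w =
      (Equiv.Perm.sign σ : ℤ) •
        (a (v ∘ extendPerm P σ ∘ .inl) ⊗ₜ[R] b (v ∘ extendPerm P σ ∘ .inr)) :=
    summand_alternatingRestrict σ a b v
  have hone : extendPerm P 1 = 1 := Equiv.Perm.extendDomain_one _
  rw [← Finset.add_sum_erase univ (fun q => AlternatingMap.domCoprod.summand a' b' q w)
    (Finset.mem_univ (Quotient.mk'' 1)), hsummand, hone, Equiv.Perm.sign_one, Units.val_one,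
    one_smul] at hsum
  refine (eq_neg_of_add_eq_zero_left hsum : a (v ∘ .inl) ⊗ₜ[R] b (v ∘ .inr) = _) ▸
    G.neg_mem (G.sum_mem fun q hq => ?_)
  induction q using Quotient.inductionOn' with | _ σ
  have hσ : σ ∉ (Equiv.Perm.sumCongrHom {i // P (.inl i)} {j // P (.inr j)}).range := fun hmem =>
    (Finset.mem_erase.1 hq).1 <| Quotient.sound' <| by
      rw [QuotientGroup.leftRel_apply, mul_one]
      exact inv_mem hmem
  obtain ⟨i, j, hij⟩ := exists_inl_eq_inr_of_notMem_sumCongrHom_range hσ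
  rw [hsummand]
  refine G.zsmul_mem (hG _ (fun s => extendPerm_of_not σ) ⟨i, j, ?_⟩) _
  rw [extendPerm_inl σ i.2, hij]
  rfl

end Alternating

section Bracket

variable {ι κ τ K : Type*} [CommRing K]

/-- The maximal minor `[f]` of `Y` whose rows are, in this order, the rows of `Y` listed by `f`. -/
def bracket [Fintype κ] [DecidableEq κ] (Y : Matrix ι κ K) (f : κ → ι) : K := (Y.submatrix f id).det

theorem bracket_eq_zero_of_not_injective [Fintype κ] [DecidableEq κ] (Y : Matrix ι κ K) {f : κ → ι}
    (hf : ¬Function.Injective f) : bracket Y f = 0 := by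
  obtain ⟨i, j, hij, hne⟩ := Function.not_injective_iff.1 hf
  exact Matrix.det_zero_of_row_eq hne (by ext; simp [hij])

theorem exists_bracket_eq_units_smul_of_map_univ_eq [Fintype κ] [DecidableEq κ]
    (Y : Matrix ι κ K) {f g : κ ↪ ι} (h : univ.map f = univ.map g) :
    ∃ u : ℤˣ, bracket Y f = u • bracket Y g := by
  have hrange : Set.range f = Set.range g := by
    simpa using congrArg (fun s : Finset ι => (s : Set ι)) h
  let σ : Equiv.Perm κ := ((Equiv.ofInjective f f.injective).trans (Equiv.setCongr hrange)).trans
    (Equiv.ofInjective g g.injective).symm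
  have hσ : g ∘ σ = f := funext fun i => by
    simp [σ, Equiv.apply_ofInjective_symm g.injective]
  refine ⟨Equiv.Perm.sign σ, ?_⟩
  rw [bracket, bracket, ← hσ, Units.smul_def, zsmul_eq_mul, ← Matrix.det_permute]
  rfl

/-- The family `t ↦ #{i | f i ∈ U t}`. When `U` is the chain of upper sets of a linear order, the
pointwise comparison of these families is the entrywise comparison of the increasing rearrangements
of the tuples. -/
noncomputable def profile (U : τ → Set ι) (f : κ → ι) (t : τ) : ℕ := (f ⁻¹' U t).ncard

variable {U : τ → Set ι}

theorem profile_exchange_lt [Finite κ] (hU : ∀ s t, U s ⊆ U t ∨ U t ⊆ U s) {f g : κ → ι} {t : τ}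
    {σ : Equiv.Perm (κ ⊕ κ)}
    (hσ : ∀ s, ¬Sum.elim (f · ∈ U t) (g · ∉ U t) s → σ s = s)
    (hmix : ∃ i j, σ (.inl i) = .inr j) :
    profile U (Sum.elim f g ∘ σ ∘ .inl) < profile U f := by
  set f₁ : κ → ι := Sum.elim f g ∘ σ ∘ .inl with hf₁
  have hinr {i j} (hij : σ (.inl i) = .inr j) : g j ∉ U t := fun hj =>
    Sum.inr_ne_inl <| σ.injective <| (hσ (.inr j) (not_not.2 hj)).trans hij.symm
  have hsub {s} (hts : U t ⊆ U s) : f₁ ⁻¹' U s ⊆ f ⁻¹' U s := fun i hi => by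
    by_cases hit : f i ∈ U t
    · exact hts hit
    · simpa [hf₁, hσ (.inl i) hit] using hi
  refine Pi.lt_def.2 ⟨fun s => ?_, t, Set.ncard_lt_ncard ?_⟩
  · rcases hU t s with hts | hst
    · exact Set.ncard_le_ncard (hsub hts)
    · have himage : (σ ∘ .inl) '' (f₁ ⁻¹' U s) ⊆ .inl '' (f ⁻¹' U s) := by
        rintro _ ⟨i, hi, rfl⟩
        rcases hi' : σ (.inl i) with k | j
        · exact ⟨k, by simpa [hf₁, hi'] using hi, hi'.symm⟩
        · exact absurd (hst (by simpa [hf₁, hi'] using hi)) (hinr hi')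
      simpa only [profile, Set.ncard_image_of_injective _ (σ.injective.comp Sum.inl_injective),
        Set.ncard_image_of_injective _ Sum.inl_injective] using Set.ncard_le_ncard himage
  · obtain ⟨i, j, hij⟩ := hmix
    have hi : f i ∈ U t := by
      by_contra hi
      exact Sum.inl_ne_inr ((hσ (.inl i) hi).symm.trans hij)
    refine (Set.ssubset_iff_of_subset (hsub subset_rfl)).2 ⟨i, hi, ?_⟩
    simpa [hf₁, hij] using hinr hij

variable [Fintype κ]

theorem map_univ_exchange_add_map_univ_exchange (f g : κ → ι) (σ : Equiv.Perm (κ ⊕ κ)) :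
    univ.val.map (Sum.elim f g ∘ σ ∘ .inl) + univ.val.map (Sum.elim f g ∘ σ ∘ .inr) =
      univ.val.map f + univ.val.map g := by
  have hsplit (v : κ ⊕ κ → ι) : univ.val.map v =
      univ.val.map (v ∘ .inl) + univ.val.map (v ∘ .inr) :=
    Multiset.map_disjSum v
  calc _ = univ.val.map (Sum.elim f g ∘ σ) := (hsplit _).symm
    _ = (univ.val.map σ).map (Sum.elim f g) := (Multiset.map_map ..).symm
    _ = univ.val.map (Sum.elim f g) := by rw [Multiset.map_univ_val_equiv]
    _ = _ := hsplit _

variable [DecidableEq κ]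

theorem bracket_mul_bracket_mem_of_forall_exchange_mem (hU : ∀ s t, U s ⊆ U t ∨ U t ⊆ U s)
    (Y : Matrix ι κ K) {f g : κ → ι} (h : ¬profile U f ≤ profile U g) (G : AddSubgroup K)
    (hG : ∀ f₁ g₁ : κ → ι, profile U f₁ < profile U f →
      univ.val.map f₁ + univ.val.map g₁ =
        univ.val.map f + univ.val.map g →
      bracket Y f₁ * bracket Y g₁ ∈ G) :
    bracket Y f * bracket Y g ∈ G := by
  obtain ⟨t, ht⟩ := not_forall.1 h
  have hcard : Fintype.card κ < Nat.card {s // Sum.elim (f · ∈ U t) (g · ∉ U t) s} := by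
    have hcompl := Set.ncard_add_ncard_compl (g ⁻¹' U t)
    rw [Nat.card_congr Equiv.subtypeSum, Nat.card_sum, ← Nat.card_eq_fintype_card, ← hcompl]
    exact Nat.add_lt_add_right (not_le.1 ht) _
  exact tmul_mem_of_forall_exchange_mem (Pi.basisFun K κ) Matrix.detRowAlternating
    Matrix.detRowAlternating (Y ∘ Sum.elim f g) _ hcard
    (G.comap (LinearMap.mul' K K).toAddMonoidHom) fun σ hσ hmix =>
      hG _ _ (profile_exchange_lt hU hσ hmix) (map_univ_exchange_add_map_univ_exchange f g σ)

/-- The products `[f'][g']` of brackets of `Y` with `f'` below `g'` whose joint content is `c`, the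
profile of `f'` being constrained to lie in `B`. -/
def standardProducts (U : τ → Set ι) (Y : Matrix ι κ K) (B : Set (τ → ℕ)) (c : Multiset ι) :
    Set K :=
  {p | ∃ f g : κ ↪ ι, profile U f ∈ B ∧ profile U f ≤ profile U g ∧
    (univ.map f).val + (univ.map g).val = c ∧ bracket Y f * bracket Y g = p}

theorem standardProducts_mono (Y : Matrix ι κ K) {B B' : Set (τ → ℕ)} (h : B ⊆ B')
    (c : Multiset ι) : standardProducts U Y B c ⊆ standardProducts U Y B' c :=
  fun _ ⟨f, g, hf, hrest⟩ => ⟨f, g, h hf, hrest⟩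

theorem bracket_mul_bracket_mem_closure_standardProducts_Iic [Finite τ]
    (hU : ∀ s t, U s ⊆ U t ∨ U t ⊆ U s) (Y : Matrix ι κ K) (f g : κ → ι) :
    bracket Y f * bracket Y g ∈ AddSubgroup.closure (standardProducts U Y (Set.Iic (profile U f))
      (univ.val.map f + univ.val.map g)) := by
  induction hp : profile U f using WellFoundedLT.induction generalizing f g with | _ p ih
  subst hp
  by_cases hf : Function.Injective f
  swap
  · simp [bracket_eq_zero_of_not_injective Y hf]
  by_cases hg : Function.Injective g
  swap
  · simp [bracket_eq_zero_of_not_injective Y hg]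
  by_cases hle : profile U f ≤ profile U g
  · exact AddSubgroup.subset_closure ⟨⟨f, hf⟩, ⟨g, hg⟩, Set.self_mem_Iic, hle, rfl, rfl⟩
  · refine bracket_mul_bracket_mem_of_forall_exchange_mem hU Y hle _ fun f₁ g₁ hlt hc => ?_
    exact AddSubgroup.closure_mono (standardProducts_mono Y (Set.Iic_subset_Iic.2 hlt.le) _)
      (hc ▸ ih _ hlt f₁ g₁ rfl)

theorem bracket_mul_bracket_mem_closure_standardProducts_Iio [Finite τ]
    (hU : ∀ s t, U s ⊆ U t ∨ U t ⊆ U s) (Y : Matrix ι κ K) {f g : κ → ι}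
    (h : ¬profile U f ≤ profile U g) :
    bracket Y f * bracket Y g ∈ AddSubgroup.closure (standardProducts U Y (Set.Iio (profile U f))
      (univ.val.map f + univ.val.map g)) :=
  bracket_mul_bracket_mem_of_forall_exchange_mem hU Y h _ fun f₁ g₁ hlt hc =>
    AddSubgroup.closure_mono (standardProducts_mono Y (Set.Iic_subset_Iio.2 hlt) _)
      (hc ▸ bracket_mul_bracket_mem_closure_standardProducts_Iic hU Y f₁ g₁)

end Bracket

theorem domLE_of_forall_card_filter_le {α : Type*} [LinearOrder α] {S T : Finset α}
    (h : ∀ t, #{a ∈ T | a ≤ t} ≤ #{a ∈ S | a ≤ t}) : domLE S T := by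
  have hcard : #T ≤ #S := by
    rcases T.eq_empty_or_nonempty with rfl | hT
    · simp
    · calc #T = #{a ∈ T | a ≤ T.max' hT} := by rw [filter_true_of_mem fun a ha => T.le_max' a ha]
        _ ≤ #{a ∈ S | a ≤ T.max' hT} := h _
        _ ≤ #S := card_filter_le _ _
  refine ⟨hcard, fun ν hνT hνS => ?_⟩
  rw [length_sort] at hνT hνS
  suffices S.orderEmbOfFin rfl ⟨ν, hνS⟩ ≤ T.orderEmbOfFin rfl ⟨ν, hνT⟩ by
    simpa only [orderEmbOfFin_apply, Fin.getElem_fin] using this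
  set t := T.orderEmbOfFin rfl ⟨ν, hνT⟩
  by_contra! hlt
  have hT : (Iic ⟨ν, hνT⟩).map (T.orderEmbOfFin rfl).toEmbedding ⊆ {a ∈ T | a ≤ t} := fun a ha => by
    obtain ⟨i, hi, rfl⟩ := mem_map.1 ha
    exact mem_filter.2 ⟨T.orderEmbOfFin_mem rfl i, (T.orderEmbOfFin rfl).monotone (mem_Iic.1 hi)⟩
  have hS : {a ∈ S | a ≤ t} ⊆ (Iio ⟨ν, hνS⟩).map (S.orderEmbOfFin rfl).toEmbedding := fun a ha => by
    obtain ⟨haS, hat⟩ := mem_filter.1 ha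
    obtain ⟨i, rfl⟩ : a ∈ Set.range (S.orderEmbOfFin rfl) := by simpa using haS
    exact mem_map_of_mem _ (mem_Iio.2 ((S.orderEmbOfFin rfl).lt_iff_lt.1 (hat.trans_lt hlt)))
  have hcount := (card_le_card hT).trans ((h t).trans (card_le_card hS))
  rw [card_map, card_map, Fin.card_Iic, Fin.card_Iio] at hcount
  exact Nat.not_succ_le_self ν hcount

section RowsColumns

variable {α β κ : Type*}

/-- The column indices occurring in a tuple of rows of `Matrix.fromRows Xᵀ 1`. -/
def colSet [Fintype κ] (f : κ ↪ β ⊕ α) : Finset β := (univ.map f).toLeft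

/-- The row indices of `X` that do not occur in a tuple of rows of `Matrix.fromRows Xᵀ 1`. -/
def rowSet [Fintype α] [DecidableEq α] [Fintype κ] (f : κ ↪ β ⊕ α) : Finset α :=
  (univ.map f).toRightᶜ

theorem card_rowSet_eq_card_colSet [Fintype α] [DecidableEq α] (f : α ↪ β ⊕ α) :
    #(rowSet f) = #(colSet f) := by
  have hsplit := card_toLeft_add_card_toRight (u := univ.map f)
  have hcompl := card_add_card_compl (univ.map f).toRight
  rw [card_map, card_univ] at hsplit
  rw [rowSet, colSet]
  lia

theorem colSet_val_add_colSet_val [Fintype κ] {f g f' g' : κ ↪ β ⊕ α}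
    (h : (univ.map f').val + (univ.map g').val = (univ.map f).val + (univ.map g).val) :
    (colSet f').val + (colSet g').val = (colSet f).val + (colSet g).val := by
  classical
  ext j
  simpa only [colSet, Multiset.count_add, Multiset.count_eq_of_nodup, nodup, mem_val, mem_toLeft]
    using congrArg (Multiset.count (.inl j)) h

theorem rowSet_val_add_rowSet_val [Fintype α] [DecidableEq α] [Fintype κ] {f g f' g' : κ ↪ β ⊕ α}
    (h : (univ.map f').val + (univ.map g').val = (univ.map f).val + (univ.map g).val) :
    (rowSet f').val + (rowSet g').val = (rowSet f).val + (rowSet g).val := by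
  classical
  ext r
  have hr := congrArg (Multiset.count (.inr r)) h
  simp only [rowSet, Multiset.count_add, Multiset.count_eq_of_nodup, nodup, mem_val, mem_compl,
    mem_toRight] at hr ⊢
  split_ifs at hr ⊢ <;> simp_all

variable [LinearOrder α] [LinearOrder β]

/-- The upper sets of the order on `β ⊕ α` that lists first `β` increasingly and then `α`
decreasingly; a tuple moving up in this order has larger column indices and, complements being
taken in `rowSet`, larger row indices as well. -/
def upperChain : β ⊕ α → Set (β ⊕ α) :=
  Sum.elim (fun j => (.inl '' Set.Iic j)ᶜ) (fun r => .inr '' Set.Iic r)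

theorem upperChain_total (s t : β ⊕ α) :
    upperChain s ⊆ upperChain t ∨ upperChain t ⊆ upperChain s := by
  have hmixed (j : β) (r : α) : upperChain (.inr r) ⊆ upperChain (Sum.inl j) := by
    rintro _ ⟨a, -, rfl⟩
    simp [upperChain]
  rcases s with j | r <;> rcases t with j' | r'
  · exact (le_total j' j).imp
      (fun h => Set.compl_subset_compl.2 (Set.image_mono (Set.Iic_subset_Iic.2 h)))
      (fun h => Set.compl_subset_compl.2 (Set.image_mono (Set.Iic_subset_Iic.2 h)))
  · exact .inr (hmixed j r')
  · exact .inl (hmixed j' r)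
  · exact (le_total r r').imp (fun h => Set.image_mono (Set.Iic_subset_Iic.2 h))
      (fun h => Set.image_mono (Set.Iic_subset_Iic.2 h))

variable [Fintype κ] (f g : κ ↪ β ⊕ α)

theorem profile_inl_add_card_filter_colSet (j : β) :
    profile upperChain f (.inl j) + #{b ∈ colSet f | b ≤ j} = Fintype.card κ := by
  have hpre : (f ⁻¹' (.inl '' Set.Iic j)).ncard = #{b ∈ colSet f | b ≤ j} := by
    rw [← Set.ncard_image_of_injective _ f.injective, Set.image_preimage_eq_inter_range,
      ← card_map Function.Embedding.inl, ← Set.ncard_coe_finset]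
    congr 1
    ext s
    cases s <;> simp [colSet, and_comm]
  rw [← hpre, ← Nat.card_eq_fintype_card, add_comm]
  exact Set.ncard_add_ncard_compl _

theorem profile_inr_add_card_filter_rowSet [Fintype α] (r : α) :
    profile upperChain f (.inr r) + #{a ∈ rowSet f | a ≤ r} = #{a : α | a ≤ r} := by
  have hpre : profile upperChain f (.inr r) = #{a ∈ (univ.map f).toRight | a ≤ r} := by
    rw [profile, ← Set.ncard_image_of_injective _ f.injective, Set.image_preimage_eq_inter_range,
      ← card_map Function.Embedding.inr, ← Set.ncard_coe_finset]
    congr 1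
    ext s
    cases s <;> simp [upperChain, and_comm]
  rw [hpre, rowSet, ← card_union_of_disjoint (disjoint_filter_filter disjoint_compl_right),
    ← filter_union, union_compl]

variable {f g}

theorem domLE_rowSet_of_profile_le [Fintype α] (h : profile upperChain f ≤ profile upperChain g) :
    domLE (rowSet f) (rowSet g) :=
  domLE_of_forall_card_filter_le fun r => by
    have hf := profile_inr_add_card_filter_rowSet f r
    have hg := profile_inr_add_card_filter_rowSet g r
    have := h (.inr r)
    lia

theorem domLE_colSet_of_profile_le (h : profile upperChain f ≤ profile upperChain g) :
    domLE (colSet f) (colSet g) :=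
  domLE_of_forall_card_filter_le fun j => by
    have hf := profile_inl_add_card_filter_colSet f j
    have hg := profile_inl_add_card_filter_colSet g j
    have := h (.inl j)
    lia

theorem profile_eq_of_rowSet_eq_of_colSet_eq [Fintype α] (hrow : rowSet f = rowSet g)
    (hcol : colSet f = colSet g) : profile upperChain f = profile upperChain g := by
  funext s
  rcases s with j | r
  · refine Nat.add_right_cancel ((profile_inl_add_card_filter_colSet f j).trans ?_)
    rw [hcol, profile_inl_add_card_filter_colSet]
  · refine Nat.add_right_cancel ((profile_inr_add_card_filter_rowSet f r).trans ?_)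
    rw [hrow, profile_inr_add_card_filter_rowSet]

end RowsColumns

section Minors

variable {m n : ℕ} {K : Type*} [CommRing K]

theorem minorM_eq_zero_of_card_ne (X : Matrix (Fin m) (Fin n) K) {S : Finset (Fin m)}
    {T : Finset (Fin n)} (h : #S ≠ #T) : minorM X S T = 0 :=
  dif_neg h

theorem map_minorM {R : Type*} [CommRing R] (φ : K →+* R) (X : Matrix (Fin m) (Fin n) K)
    (S : Finset (Fin m)) (T : Finset (Fin n)) :
    φ (minorM X S T) = minorM (X.map φ) S T := by
  unfold minorM
  split_ifs with h
  · exact RingHom.map_det ..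
  · exact map_zero φ

/-- The tuple of rows of `Matrix.fromRows Xᵀ 1` whose bracket is the minor `X(S|T)`: the columns of
`X` with index in `T` stand at the positions in `S`, and unit vectors at the other positions, so
that the positions in `S` and in `Sᶜ` give a block triangular matrix with an identity block. -/
def minorTuple (S : Finset (Fin m)) (T : Finset (Fin n)) (h : #S = #T) : Fin m ↪ Fin n ⊕ Fin m :=
  (finSumEquivOfFinset rfl rfl).symm.toEmbedding.trans
    ((T.orderEmbOfFin h.symm).toEmbedding.sumMap (Sᶜ.orderEmbOfFin rfl).toEmbedding)

theorem map_univ_minorTuple (S : Finset (Fin m)) (T : Finset (Fin n)) (h : #S = #T) :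
    univ.map (minorTuple S T h) = T.disjSum Sᶜ := by
  have hT (i) : (∃ a, T.orderEmbOfFin h.symm a = i) ↔ i ∈ T :=
    Set.ext_iff.1 (T.range_orderEmbOfFin h.symm) i
  have hS (i) : (∃ a, Sᶜ.orderEmbOfFin rfl a = i) ↔ i ∈ Sᶜ :=
    Set.ext_iff.1 (Sᶜ.range_orderEmbOfFin rfl) i
  rw [minorTuple, ← map_map, Finset.map_univ_equiv, eq_disjSum_iff]
  constructor <;> ext i
  · simpa using hT i
  · simpa using hS i

theorem colSet_minorTuple (S : Finset (Fin m)) (T : Finset (Fin n)) (h : #S = #T) :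
    colSet (minorTuple S T h) = T := by
  rw [colSet, map_univ_minorTuple, toLeft_disjSum]

theorem rowSet_minorTuple (S : Finset (Fin m)) (T : Finset (Fin n)) (h : #S = #T) :
    rowSet (minorTuple S T h) = S := by
  rw [rowSet, map_univ_minorTuple, toRight_disjSum, compl_compl]

theorem bracket_minorTuple (X : Matrix (Fin m) (Fin n) K) (S : Finset (Fin m))
    (T : Finset (Fin n)) (h : #S = #T) :
    bracket (Matrix.fromRows X.transpose 1) (minorTuple S T h) = minorM X S T := by
  let e : Fin #S ⊕ Fin #Sᶜ ≃ Fin m := finSumEquivOfFinset rfl rfl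
  have hblocks : ((Matrix.fromRows X.transpose 1).submatrix (minorTuple S T h ∘ e) e).transpose =
      Matrix.fromBlocks (Matrix.of fun i j => X (S.orderEmbOfFin rfl i) (T.orderEmbOfFin h.symm j))
        0 (Matrix.of fun i j => X (Sᶜ.orderEmbOfFin rfl i) (T.orderEmbOfFin h.symm j)) 1 := by
    have hdisj (i : Fin #S) (j : Fin #Sᶜ) : Sᶜ.orderEmbOfFin rfl j ≠ S.orderEmbOfFin rfl i :=
      fun hij => mem_compl.1 (Sᶜ.orderEmbOfFin_mem rfl j) (hij ▸ S.orderEmbOfFin_mem rfl i)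
    have htuple (s) : minorTuple S T h (e s) =
        Sum.map (T.orderEmbOfFin h.symm) (Sᶜ.orderEmbOfFin rfl) s :=
      congrArg (Sum.map _ _) (e.symm_apply_apply s)
    ext (i | i) (j | j) <;>
      simp only [Matrix.transpose_apply, Matrix.submatrix_apply, Function.comp_apply, htuple] <;>
      simp [e, Matrix.one_apply, hdisj, eq_comm]
  rw [minorM, dif_pos h, bracket, ← Matrix.det_submatrix_equiv_self e, ← Matrix.det_transpose,
    Matrix.submatrix_submatrix, Function.id_comp, hblocks, Matrix.det_fromBlocks_zero₁₂,
    Matrix.det_one, mul_one]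

theorem exists_bracket_eq_units_smul_minorM (X : Matrix (Fin m) (Fin n) K)
    (f : Fin m ↪ Fin n ⊕ Fin m) : ∃ u : ℤˣ,
    bracket (Matrix.fromRows X.transpose 1) f = u • minorM X (rowSet f) (colSet f) := by
  rw [← bracket_minorTuple X _ _ (card_rowSet_eq_card_colSet f)]
  refine exists_bracket_eq_units_smul_of_map_univ_eq _ ?_
  rw [map_univ_minorTuple, rowSet, compl_compl, colSet, toLeft_disjSum_toRight]

/-- The products `X(S₁|T₁) X(S₂|T₂)` that may occur in a content-preserving straightening relation
for `X(S′|T′) X(S″|T″)`. -/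
def straightenedProducts (X : Matrix (Fin m) (Fin n) K) (S' S'' : Finset (Fin m))
    (T' T'' : Finset (Fin n)) : Set K :=
  {p | ∃ S₁ S₂ T₁ T₂, (domLE S₁ S' ∧ domLE T₁ T' ∧ (S₁, T₁) ≠ (S', T')) ∧
    (domLE S₁ S₂ ∧ domLE T₁ T₂) ∧
    (S₁.val + S₂.val = S'.val + S''.val ∧ T₁.val + T₂.val = T'.val + T''.val) ∧
    minorM X S₁ T₁ * minorM X S₂ T₂ = p}

theorem bracket_mul_bracket_mem_closure_straightenedProducts (X : Matrix (Fin m) (Fin n) K)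
    {f g f₁ g₁ : Fin m ↪ Fin n ⊕ Fin m} (hlt : profile upperChain f₁ < profile upperChain f)
    (hle : profile upperChain f₁ ≤ profile upperChain g₁)
    (hc : (univ.map f₁).val + (univ.map g₁).val = (univ.map f).val + (univ.map g).val) :
    bracket (Matrix.fromRows X.transpose 1) f₁ * bracket (Matrix.fromRows X.transpose 1) g₁ ∈
      AddSubgroup.closure
        (straightenedProducts X (rowSet f) (rowSet g) (colSet f) (colSet g)) := by
  obtain ⟨u, hu⟩ := exists_bracket_eq_units_smul_minorM X f₁
  obtain ⟨v, hv⟩ := exists_bracket_eq_units_smul_minorM X g₁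
  have hne : (rowSet f₁, colSet f₁) ≠ (rowSet f, colSet f) := fun heq =>
    hlt.ne (profile_eq_of_rowSet_eq_of_colSet_eq (congrArg Prod.fst heq) (congrArg Prod.snd heq))
  have hmem : minorM X (rowSet f₁) (colSet f₁) * minorM X (rowSet g₁) (colSet g₁) ∈
      straightenedProducts X (rowSet f) (rowSet g) (colSet f) (colSet g) :=
    ⟨_, _, _, _, ⟨domLE_rowSet_of_profile_le hlt.le, domLE_colSet_of_profile_le hlt.le, hne⟩,
      ⟨domLE_rowSet_of_profile_le hle, domLE_colSet_of_profile_le hle⟩,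
      ⟨rowSet_val_add_rowSet_val hc, colSet_val_add_colSet_val hc⟩, rfl⟩
  rw [hu, hv, smul_mul_smul_comm, Units.smul_def]
  exact zsmul_mem (AddSubgroup.subset_closure hmem) _

theorem minorM_mul_minorM_mem_closure_straightenedProducts (X : Matrix (Fin m) (Fin n) K)
    {S' S'' : Finset (Fin m)} {T' T'' : Finset (Fin n)} (h : ¬(domLE S' S'' ∧ domLE T' T'')) :
    minorM X S' T' * minorM X S'' T'' ∈
      AddSubgroup.closure (straightenedProducts X S' S'' T' T'') := by
  by_cases h' : #S' = #T'
  swap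
  · simp [minorM_eq_zero_of_card_ne X h']
  by_cases h'' : #S'' = #T''
  swap
  · simp [minorM_eq_zero_of_card_ne X h'']
  have hprofile : ¬profile upperChain (minorTuple S' T' h') ≤
      profile upperChain (minorTuple S'' T'' h'') := fun hle => h <| by
    simpa only [rowSet_minorTuple, colSet_minorTuple] using
      And.intro (domLE_rowSet_of_profile_le hle) (domLE_colSet_of_profile_le hle)
  rw [← bracket_minorTuple X S' T' h', ← bracket_minorTuple X S'' T'' h'']
  refine (AddSubgroup.closure_le _).2 ?_
    (bracket_mul_bracket_mem_closure_standardProducts_Iio upperChain_total _ hprofile)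
  rintro _ ⟨f₁, g₁, hlt, hle, hc, rfl⟩
  simpa only [rowSet_minorTuple, colSet_minorTuple, SetLike.mem_coe] using
    bracket_mul_bracket_mem_closure_straightenedProducts X hlt hle hc

end Minors

/-- Remark 1: the straightening relation of Theorem 3 can be chosen content-preserving:
in addition, `S′ᵢ ∪ S″ᵢ = S′ ∪ S″` and `T′ᵢ ∪ T″ᵢ = T′ ∪ T″` as multisets. -/
theorem statement13 {m n : ℕ} (S' S'' : Finset (Fin m)) (T' T'' : Finset (Fin n))
    (h : ¬(domLE S' S'' ∧ domLE T' T'')) :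
    ∃ (k : ℕ) (S₁ S₂ : Fin k → Finset (Fin m)) (T₁ T₂ : Fin k → Finset (Fin n))
      (ε : Fin k → ℤ),
      (∀ i, ε i = 1 ∨ ε i = -1) ∧
      (∀ i, domLE (S₁ i) S' ∧ domLE (T₁ i) T' ∧ (S₁ i, T₁ i) ≠ (S', T')) ∧
      (∀ i, domLE (S₁ i) (S₂ i) ∧ domLE (T₁ i) (T₂ i)) ∧
      (∀ i, (S₁ i).val + (S₂ i).val = S'.val + S''.val ∧
            (T₁ i).val + (T₂ i).val = T'.val + T''.val) ∧
      ∀ (R : Type*) [CommRing R] (X : Matrix (Fin m) (Fin n) R),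
        minorM X S' T' * minorM X S'' T'' =
          ∑ i, (ε i : R) * (minorM X (S₁ i) (T₁ i) * minorM X (S₂ i) (T₂ i)) := by
  obtain ⟨k, ε, p, hp, hsum⟩ := exists_sum_units_smul_of_mem_closure
    (minorM_mul_minorM_mem_closure_straightenedProducts (genX m n ℤ) h)
  choose S₁ S₂ T₁ T₂ hbelow hstd hcontent hprod using hp
  refine ⟨k, S₁, S₂, T₁, T₂, fun i => ε i, fun i => Int.isUnit_iff.1 (ε i).isUnit, hbelow, hstd,
    hcontent, fun R _ X => ?_⟩
  let φ : MvPolynomial (Fin m × Fin n) ℤ →+* R :=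
    MvPolynomial.eval₂Hom (Int.castRingHom R) fun q => X q.1 q.2
  have hX : (genX m n ℤ).map φ = X := by
    ext i j
    simp [φ, genX]
  have hφ := congrArg φ hsum
  simpa only [← hprod, map_sum, Units.smul_def, zsmul_eq_mul, map_mul, map_intCast, map_minorM, hX]
    using hφ
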